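/- Five-term functional equation for the additive dilogarithm ℓi₂ in characteristic p: Let k be a field of characteristic p ≥ 5, and define ℓi₂([s+at]) = −a³/(2s²(1−s)²) for s + at ∈ (k[t]/(t²))^♭. Then for x = s + at, y = u + bt in (k[t]/(t²))^♭ with x − y a unit, ℓi₂([x]) − ℓi₂([y]) + ℓi₂([y/x]) − ℓi₂([(1−x⁻¹)/(1−y⁻¹)]) + ℓi₂([(1−x)/(1−y)]) = 0. -/

import Mathlib

open TrivSqZeroExt

/-- The additive dilogarithm `ℓi₂` on `k₂ = k[t]/(t²)` (realized as dual
numbers): `ℓi₂(s + at) = −a³/(2s²(1−s)²)`. -/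
noncomputable def li2 {k : Type*} [Field k] (z : DualNumber k) : k :=
  -((snd z) ^ 3 / (2 * (fst z) ^ 2 * (1 - fst z) ^ 2))

/-! The function `ℓi₂` is a cubic form in logarithmic derivatives: writing `dlog (s + at) = a / s`,
one has `2 ℓi₂(z) = α β (α - β)` for `α = dlog z` and `β = dlog (1 - z)`. Since `dlog` turns
products into sums, twice each term of the five-term relation becomes a cubic polynomial in the five
quantities `dlog x`, `dlog y`, `dlog (1 - x)`, `dlog (1 - y)` and `dlog (x - y)`. These depend on
only four parameters and satisfy one cubic equation, of which the relation is a multiple. -/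

section

open scoped Ring

theorem isUnit_ringInverse_sub_ringInverse {R : Type*} [Ring R] {a b : R} (ha : IsUnit a)
    (hb : IsUnit b) (hab : IsUnit (a - b)) : IsUnit (a⁻¹ʳ - b⁻¹ʳ) := by
  rw [Ring.inverse_sub_inverse (iff_of_true ha hb), ← neg_sub]
  exact (ha.ringInverse.mul hab.neg).mul hb.ringInverse

theorem isUnit_iff_fst_ne_zero {R M : Type*} [DivisionSemiring R] [AddCommGroup M] [Module R M]
    [Module Rᵐᵒᵖ M] [SMulCommClass R Rᵐᵒᵖ M] {z : TrivSqZeroExt R M} : IsUnit z ↔ fst z ≠ 0 :=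
  isUnit_iff_isUnit_fst.trans isUnit_iff_ne_zero

theorem isUnit_sub_iff_fst_ne {R M : Type*} [DivisionRing R] [AddCommGroup M] [Module R M]
    [Module Rᵐᵒᵖ M] [SMulCommClass R Rᵐᵒᵖ M] {z w : TrivSqZeroExt R M} :
    IsUnit (z - w) ↔ fst z ≠ fst w := by
  rw [isUnit_iff_fst_ne_zero, fst_sub, sub_ne_zero]

variable {k : Type*} [Field k] {x y z w : DualNumber k}

/-- The logarithmic derivative `a / s` of the dual number `s + at`; it is `0` if `s = 0`. -/
noncomputable def dlog (z : DualNumber k) : k := snd z / fst z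

@[simp]
theorem dlog_one : dlog (1 : DualNumber k) = 0 := by simp [dlog]

theorem dlog_neg (z : DualNumber k) : dlog (-z) = dlog z := by simp [dlog]

theorem dlog_sub_comm (z w : DualNumber k) : dlog (z - w) = dlog (w - z) := by
  rw [← neg_sub, dlog_neg]

theorem dlog_mul (hz : IsUnit z) (hw : IsUnit w) : dlog (z * w) = dlog z + dlog w := by
  rw [isUnit_iff_fst_ne_zero] at hz hw
  simp only [dlog, fst_mul, DualNumber.snd_mul]
  field_simp
  ring

theorem dlog_ringInverse (hz : IsUnit z) : dlog z⁻¹ʳ = -dlog z := by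
  rw [eq_neg_iff_add_eq_zero, ← dlog_mul hz.ringInverse hz, Ring.inverse_mul_cancel z hz, dlog_one]

theorem dlog_ringInverse_sub_ringInverse (hz : IsUnit z) (hw : IsUnit w) (hzw : IsUnit (z - w)) :
    dlog (z⁻¹ʳ - w⁻¹ʳ) = dlog (z - w) - dlog z - dlog w := by
  have hwz : IsUnit (w - z) := by simpa only [neg_sub] using hzw.neg
  rw [Ring.inverse_sub_inverse (iff_of_true hz hw),
    dlog_mul (hz.ringInverse.mul hwz) hw.ringInverse, dlog_mul hz.ringInverse hwz,
    dlog_ringInverse hz, dlog_ringInverse hw, dlog_sub_comm w]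
  ring

-- For `x = s + at` and `y = u + bt`, eliminate `s` and `u` from the three linear equations
-- `s * dlog x + (1 - s) * dlog (1 - x) = 0`, `u * dlog y + (1 - u) * dlog (1 - y) = 0` and
-- `(s - u) * dlog (x - y) = s * dlog x - u * dlog y`.
theorem dlog_cubic_relation (hx : IsUnit x) (hy : IsUnit y) (hx1 : IsUnit (1 - x))
    (hy1 : IsUnit (1 - y)) (hxy : IsUnit (x - y)) :
    dlog (x - y) * (dlog x * dlog (1 - y) - dlog y * dlog (1 - x)) =
      dlog x * dlog (1 - y) * (dlog (1 - x) + dlog y) -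
        dlog y * dlog (1 - x) * (dlog x + dlog (1 - y)) := by
  simp only [isUnit_iff_fst_ne_zero, fst_sub, fst_one] at hx hy hx1 hy1 hxy
  simp only [dlog, fst_sub, snd_sub, fst_one, snd_one]
  field_simp
  ring

theorem two_mul_li2 (h2 : (2 : k) ≠ 0) (hz : IsUnit z) (hz1 : IsUnit (1 - z)) :
    2 * li2 z = dlog z * dlog (1 - z) * (dlog z - dlog (1 - z)) := by
  simp only [isUnit_iff_fst_ne_zero, fst_sub, fst_one] at hz hz1
  simp only [li2, dlog, fst_sub, snd_sub, fst_one, snd_one]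
  field_simp
  ring

theorem two_mul_li2_mul_ringInverse (h2 : (2 : k) ≠ 0) (hw : IsUnit w) (hz : IsUnit z)
    (hzw : IsUnit (z - w)) :
    2 * li2 (w * z⁻¹ʳ) =
      (dlog w - dlog z) * (dlog (z - w) - dlog z) * (dlog w - dlog (z - w)) := by
  have one_sub_eq : 1 - w * z⁻¹ʳ = (z - w) * z⁻¹ʳ := by
    rw [sub_mul, Ring.mul_inverse_cancel z hz]
  rw [two_mul_li2 h2 (hw.mul hz.ringInverse) (one_sub_eq ▸ hzw.mul hz.ringInverse), one_sub_eq,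
    dlog_mul hw hz.ringInverse, dlog_mul hzw hz.ringInverse, dlog_ringInverse hz]
  ring

theorem two_mul_li2_one_sub_ringInverse_mul (h2 : (2 : k) ≠ 0) (hx : IsUnit x) (hy : IsUnit y)
    (hx1 : IsUnit (1 - x)) (hy1 : IsUnit (1 - y)) (hxy : IsUnit (x - y)) :
    2 * li2 ((1 - x⁻¹ʳ) * (1 - y⁻¹ʳ)⁻¹ʳ) =
      (dlog (1 - x) - dlog x + dlog y - dlog (1 - y)) *
        (dlog (x - y) - dlog x - dlog (1 - y)) *
        (dlog (1 - x) + dlog y - dlog (x - y)) := by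
  have isUnit_one_sub {z : DualNumber k} (hz : IsUnit z) (hz1 : IsUnit (1 - z)) :
      IsUnit (1 - z⁻¹ʳ) := by
    simpa only [Ring.inverse_one] using isUnit_ringInverse_sub_ringInverse isUnit_one hz hz1
  have dlog_one_sub {z : DualNumber k} (hz : IsUnit z) (hz1 : IsUnit (1 - z)) :
      dlog (1 - z⁻¹ʳ) = dlog (1 - z) - dlog z := by
    simpa using dlog_ringInverse_sub_ringInverse isUnit_one hz hz1
  rw [two_mul_li2_mul_ringInverse h2 (isUnit_one_sub hx hx1) (isUnit_one_sub hy hy1),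
    sub_sub_sub_cancel_left, dlog_ringInverse_sub_ringInverse hx hy hxy, dlog_one_sub hx hx1,
    dlog_one_sub hy hy1]
  · ring
  · simpa only [sub_sub_sub_cancel_left] using isUnit_ringInverse_sub_ringInverse hx hy hxy

theorem li2_five_term_general (h2 : (2 : k) ≠ 0)
    (hx0 : fst x ≠ 0) (hx1 : fst x ≠ 1) (hy0 : fst y ≠ 0) (hy1 : fst y ≠ 1)
    (hxy : fst x ≠ fst y) :
    li2 x - li2 y + li2 (y * x⁻¹ʳ) - li2 ((1 - x⁻¹ʳ) * (1 - y⁻¹ʳ)⁻¹ʳ) +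
      li2 ((1 - x) * (1 - y)⁻¹ʳ) = 0 := by
  replace hx0 : IsUnit x := isUnit_iff_fst_ne_zero.2 hx0
  replace hy0 : IsUnit y := isUnit_iff_fst_ne_zero.2 hy0
  replace hx1 : IsUnit (1 - x) := isUnit_sub_iff_fst_ne.2 hx1.symm
  replace hy1 : IsUnit (1 - y) := isUnit_sub_iff_fst_ne.2 hy1.symm
  replace hxy : IsUnit (x - y) := isUnit_sub_iff_fst_ne.2 hxy
  have hquot := two_mul_li2_mul_ringInverse h2 hx1 hy1 (by rwa [sub_sub_sub_cancel_left])
  rw [sub_sub_sub_cancel_left] at hquot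
  refine (mul_eq_zero.1 ?_).resolve_left h2
  linear_combination two_mul_li2 h2 hx0 hx1 - two_mul_li2 h2 hy0 hy1 +
    two_mul_li2_mul_ringInverse h2 hy0 hx0 hxy -
    two_mul_li2_one_sub_ringInverse_mul h2 hx0 hy0 hx1 hy1 hxy + hquot +
    2 * dlog_cubic_relation hx0 hy0 hx1 hy1 hxy

end

/-- Five-term functional equation for the additive dilogarithm `ℓi₂` in
characteristic `p ≥ 5`: for `x, y ∈ (k[t]/(t²))^♭` with `x − y` a unit,
`ℓi₂(x) − ℓi₂(y) + ℓi₂(y/x) − ℓi₂((1−x⁻¹)/(1−y⁻¹)) + ℓi₂((1−x)/(1−y)) = 0`. -/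
theorem li2_five_term (p : ℕ) [Fact p.Prime] (hp5 : 5 ≤ p)
    (k : Type*) [Field k] [CharP k p] (x y : DualNumber k)
    (hx0 : fst x ≠ 0) (hx1 : fst x ≠ 1) (hy0 : fst y ≠ 0) (hy1 : fst y ≠ 1)
    (hxy : fst x ≠ fst y) :
    li2 x - li2 y + li2 (y * Ring.inverse x) -
        li2 ((1 - Ring.inverse x) * Ring.inverse (1 - Ring.inverse y)) +
        li2 ((1 - x) * Ring.inverse (1 - y)) = 0 :=
  li2_five_term_general (CharP.cast_ne_zero_of_ne_of_prime k Nat.prime_two (by omega : p ≠ 2))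
    hx0 hx1 hy0 hy1 hxy
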